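/- Let B ⊂ ℝ⁴ be open, f = (f⁴,…,f⁷): B → ℝ⁴ and A = (A⁰,…,A³): B → ℝ⁴ smooth, with F_∇^S, F_∇^B, F_∇ = F_∇^B + F_∇^S, tangent vectors v_j(x) and β = −√−1·F_∇^B as in the context. Then the following are equivalent: (1) τ(v₀(x),…,v₃(x)) = 0 for every x ∈ B (the graph S is Cayley with an appropriate orientation) and, for every x ∈ B, the 2-form β(x) on ℝ⁴ is anti-self-dual with respect to the induced metric g(x) (g_{ij}(x) = ⟨v_i(x),v_j(x)⟩) and the orientation of ℝ⁴ that is sign(Φ(v₀(x),…,v₃(x))) times the standard one (this sign is well defined since Φ(v₀,…,v₃) ≠ 0 when τ vanishes); (2) π²₇( F_∇ + (1/6)·*₈F_∇³ ) = 0 and π⁴₇( F_∇² ) = 0 at every point of B. -/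

import Mathlib

open scoped BigOperators

noncomputable section

namespace FMpaper

variable {K : Type*} [NormedField K] [NormedAlgebra ℝ K]

/-- Coefficient model for the exterior algebra of `(ℝⁿ)*` with scalars in `K`:
a form is given by its coefficients on the basis `e^S`, `S ⊆ {0, …, n-1}` sorted. -/
abbrev Form (K : Type*) (n : ℕ) := Finset (Fin n) → K

variable {n : ℕ}

/-- Sign such that `e^s ∧ e^t = signMerge s t • e^(s ∪ t)` for disjoint sorted `s, t`. -/
def signMerge (s t : Finset (Fin n)) : K :=
  (-1 : K) ^ (((s ×ˢ t).filter (fun p => p.2 < p.1)).card)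

/-- Wedge product. -/
def wedge (α β : Form K n) : Form K n :=
  fun u => ∑ s ∈ u.powerset, signMerge s (u \ s) * α s * β (u \ s)

/-- Hodge star operator (for the standard inner product and orientation `e^{0⋯(n-1)}`). -/
def hstar (α : Form K n) : Form K n :=
  fun t => signMerge tᶜ t * α tᶜ

/-- Interior product with the basis vector `e_μ`. -/
def iprodB (μ : Fin n) (α : Form K n) : Form K n :=
  fun t => if μ ∈ t then 0
    else (-1 : K) ^ ((t.filter (fun j => j < μ)).card) * α (insert μ t)

/-- Interior product with the vector `v`. -/
def iprod (v : Fin n → K) (α : Form K n) : Form K n :=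
  fun t => ∑ μ, v μ * iprodB μ α t

/-- The basis covector `e^i` as a 1-form. -/
def e1 (i : Fin n) : Form K n := fun s => if s = {i} then 1 else 0

/-- The covector `v♭` dual to a vector `v`. -/
def flat (v : Fin n → K) : Form K n := ∑ i, v i • e1 i

/-- The vector `α♯` dual to a 1-form `α`. -/
def sharp1 (α : Form K n) : Fin n → K := fun i => α {i}

/-- The inner product of forms (extended `K`-bilinearly). -/
def inner' (α β : Form K n) : K := ∑ s, α s * β s

/-- The (Euclidean) norm of a form; for an `√-1 ℝ`-valued form `√-1 γ` this is `‖γ‖`. -/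
def fnorm (α : Form K n) : ℝ := Real.sqrt (∑ s, ‖α s‖ ^ 2)

/-- `α` is homogeneous of degree `k`. -/
def isGrade (k : ℕ) (α : Form K n) : Prop := ∀ s, s.card ≠ k → α s = 0

/-- Evaluation of a `k`-form on `k` vectors. -/
def evalForm {k : ℕ} (α : Form K n) (v : Fin k → (Fin n → K)) : K :=
  ∑ s : Finset (Fin n), α s *
    (if h : s.card = k then
      Matrix.det (Matrix.of fun i j => v i ((s.orderIsoOfFin h j : Fin n))) else 0)

/-- The matrix of the skew-symmetric endomorphism `γ♯` associated with a 2-form `γ`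
via `⟨γ♯ u, v⟩ = γ(u, v)`. -/
def mat2 (γ : Form K n) : Matrix (Fin n) (Fin n) K :=
  Matrix.of fun i j => if i < j then γ {i, j} else if j < i then - γ {i, j} else 0

/-- The standard `G₂` 3-form `φ = e^{123}+e^{145}+e^{167}+e^{246}−e^{257}−e^{347}−e^{356}`
on `ℝ⁷` (indices `1, …, 7` shifted to `0, …, 6`). -/
def phi7 : Form K 7 := fun s =>
  if s = ({0, 1, 2} : Finset (Fin 7)) then 1
  else if s = ({0, 3, 4} : Finset (Fin 7)) then 1
  else if s = ({0, 5, 6} : Finset (Fin 7)) then 1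
  else if s = ({1, 3, 5} : Finset (Fin 7)) then 1
  else if s = ({1, 4, 6} : Finset (Fin 7)) then -1
  else if s = ({2, 3, 6} : Finset (Fin 7)) then -1
  else if s = ({2, 4, 5} : Finset (Fin 7)) then -1
  else 0

/-- `*₇φ = e^{4567}+e^{2367}+e^{2345}+e^{1357}−e^{1346}−e^{1256}−e^{1247}` on `ℝ⁷`. -/
def psi7 : Form K 7 := fun s =>
  if s = ({3, 4, 5, 6} : Finset (Fin 7)) then 1
  else if s = ({1, 2, 5, 6} : Finset (Fin 7)) then 1
  else if s = ({1, 2, 3, 4} : Finset (Fin 7)) then 1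
  else if s = ({0, 2, 4, 6} : Finset (Fin 7)) then 1
  else if s = ({0, 2, 3, 5} : Finset (Fin 7)) then -1
  else if s = ({0, 1, 4, 5} : Finset (Fin 7)) then -1
  else if s = ({0, 1, 3, 6} : Finset (Fin 7)) then -1
  else 0

/-- The `G₂` 3-form `φ` on `V = span{e₁, …, e₇} ⊂ ℝ⁸`, regarded as a form on `ℝ⁸`
annihilated by `i(e₀)` (indices `1, …, 7` of `ℝ⁸`). -/
def phi8 : Form K 8 := fun s =>
  if s = ({1, 2, 3} : Finset (Fin 8)) then 1
  else if s = ({1, 4, 5} : Finset (Fin 8)) then 1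
  else if s = ({1, 6, 7} : Finset (Fin 8)) then 1
  else if s = ({2, 4, 6} : Finset (Fin 8)) then 1
  else if s = ({2, 5, 7} : Finset (Fin 8)) then -1
  else if s = ({3, 4, 7} : Finset (Fin 8)) then -1
  else if s = ({3, 5, 6} : Finset (Fin 8)) then -1
  else 0

/-- `*₇φ` on `V ⊂ ℝ⁸`, regarded as a 4-form on `ℝ⁸` annihilated by `i(e₀)`. -/
def psi8 : Form K 8 := fun s =>
  if s = ({4, 5, 6, 7} : Finset (Fin 8)) then 1
  else if s = ({2, 3, 6, 7} : Finset (Fin 8)) then 1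
  else if s = ({2, 3, 4, 5} : Finset (Fin 8)) then 1
  else if s = ({1, 3, 5, 7} : Finset (Fin 8)) then 1
  else if s = ({1, 3, 4, 6} : Finset (Fin 8)) then -1
  else if s = ({1, 2, 5, 6} : Finset (Fin 8)) then -1
  else if s = ({1, 2, 4, 7} : Finset (Fin 8)) then -1
  else 0

/-- The standard Cayley 4-form `Φ = e⁰ ∧ φ + *₇φ` on `ℝ⁸`. -/
def Phi8 : Form K 8 := wedge (e1 0) phi8 + psi8

/-- The index set of `V = span{e₁, …, e₇} ⊂ ℝ⁸`. -/
def Vset : Finset (Fin 8) := {1, 2, 3, 4, 5, 6, 7}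

/-- The Hodge star `*₇` of `V ⊂ ℝ⁸` (volume form `e^{1⋯7}`), acting on forms on `ℝ⁸`
annihilated by `i(e₀)`. -/
def star7 (α : Form K 8) : Form K 8 :=
  fun t => if (0 : Fin 8) ∈ t then 0 else signMerge (Vset \ t) t * α (Vset \ t)

/-- `α` is (the pullback of) a form on `V`, i.e. `i(e₀) α = 0`. -/
def onV (α : Form K 8) : Prop := ∀ s, (0 : Fin 8) ∈ s → α s = 0

/-- `λ²(α) = ½ (e⁰ ∧ α + i(α♯) φ)` for `α ∈ V*`. -/
def lambda2 (α : Form K 8) : Form K 8 :=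
  (2 : K)⁻¹ • (wedge (e1 0) α + iprod (sharp1 α) phi8)

/-- `λ⁴(α) = (1/√8) (e⁰ ∧ i(α♯) *₇φ − α ∧ φ)` for `α ∈ V*`. -/
def lambda4 (α : Form K 8) : Form K 8 :=
  (algebraMap ℝ K (Real.sqrt 8))⁻¹ • (wedge (e1 0) (iprod (sharp1 α) psi8) - wedge α phi8)

/-- `λ⁶(α) = *₈ λ²(α)` for `α ∈ V*`. -/
def lambda6 (α : Form K 8) : Form K 8 := hstar (lambda2 α)

/-- The projection `π²₇(α) = (α + *₈(Φ ∧ α))/4` onto `Λ²₇`. -/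
def pi27 (α : Form K 8) : Form K 8 := (4 : K)⁻¹ • (α + hstar (wedge Phi8 α))

/-- The projection `π⁴₇(β) = Σ_{μ=1}^{7} ⟨β, λ⁴(e^μ)⟩ λ⁴(e^μ)` onto `Λ⁴₇`. -/
def pi47 (β : Form K 8) : Form K 8 :=
  ∑ μ : Fin 7, inner' β (lambda4 (e1 μ.succ)) • lambda4 (e1 μ.succ)

/-- `τ(u₀,u₁,u₂,u₃) = Σ_{μ=1}^{7} λ⁴(e^μ)(u₀,u₁,u₂,u₃) ⬝ λ⁴(e^μ) = π⁴₇(u₀♭∧u₁♭∧u₂♭∧u₃♭)`. -/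
def tau4 (u : Fin 4 → (Fin 8 → K)) : Form K 8 :=
  ∑ μ : Fin 7, evalForm (lambda4 (e1 μ.succ)) u • lambda4 (e1 μ.succ)

/-- Partial derivative `∂f^a/∂x^j` at `x`. -/
def pd {m p : ℕ} (f : (Fin m → ℝ) → (Fin p → ℝ)) (x : Fin m → ℝ) (j : Fin m) (a : Fin p) : ℝ :=
  fderiv ℝ f x (Pi.single j 1) a


/-! Graph setting for Cayley `T⁴`-fibrations: `ℝ⁸ = ℝ⁴ × ℝ⁴` with coordinates
`(x⁰,…,x³,y⁴,…,y⁷)`. -/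

/-- The index of the coordinate `x^j` in `ℝ⁸`. -/
def xi (j : Fin 4) : Fin 8 := Fin.castAdd 4 j

/-- The index of the coordinate `y^a` (`a = 4,…,7` shifted to `0,…,3`) in `ℝ⁸`. -/
def yi (a : Fin 4) : Fin 8 := a.addNat 4

/-- The spanning tangent vectors `v_j = ∂_j + Σ_a (∂f^a/∂x^j) ∂_a` of the graph of `f`. -/
def vG (f : (Fin 4 → ℝ) → (Fin 4 → ℝ)) (x : Fin 4 → ℝ) (j : Fin 4) : Fin 8 → ℝ :=
  Pi.single (xi j) 1 + ∑ a : Fin 4, pd f x j a • (Pi.single (yi a) 1 : Fin 8 → ℝ)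

/-- The real 2-form `γ` with `F_∇^S = √-1 γ`, i.e. `γ = Σ_{j,a} (∂f^a/∂x^j) dx^j ∧ dy^a`. -/
def gammaS (f : (Fin 4 → ℝ) → (Fin 4 → ℝ)) (x : Fin 4 → ℝ) : Form ℝ 8 :=
  ∑ j : Fin 4, ∑ a : Fin 4, pd f x j a • wedge (e1 (xi j)) (e1 (yi a))

/-- The `√-1 ℝ`-valued curvature 2-form
`F_∇^S = √-1 Σ_{j,a} (∂f^a/∂x^j) dx^j ∧ dy^a` of the real Fourier–Mukai transform. -/
def FS8 (f : (Fin 4 → ℝ) → (Fin 4 → ℝ)) (x : Fin 4 → ℝ) : Form ℂ 8 :=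
  fun s => Complex.I * (gammaS f x s : ℂ)

/-! Anti-self-duality on `ℝ⁴` with respect to an arbitrary metric `G` and
orientation `ε` times the standard one. -/

/-- The indicator 2-form `e^u` on `ℝ⁴`. -/
def indF (u : Finset (Fin 4)) : Form ℝ 4 := fun s => if s = u then 1 else 0

/-- The 2×2 minor `det (H_{s t})` of a matrix `H` with rows `s` and columns `t` (sorted). -/
def minor2 (H : Matrix (Fin 4) (Fin 4) ℝ) (s t : Finset (Fin 4)) : ℝ :=
  if hs : s.card = 2 then
    if ht : t.card = 2 then
      Matrix.det (Matrix.of fun i j =>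
        H (s.orderIsoOfFin hs i : Fin 4) (t.orderIsoOfFin ht j : Fin 4))
    else 0
  else 0

/-- The inner product on 2-forms on `ℝ⁴` induced by the metric whose *inverse* Gram
matrix is `H`:  `⟨e^s, e^t⟩ = det (H_{s t})`. -/
def innerG2 (H : Matrix (Fin 4) (Fin 4) ℝ) (α β : Form ℝ 4) : ℝ :=
  ∑ s, ∑ t, α s * β t * minor2 H s t

/-- The Hodge star on 2-forms on `ℝ⁴` for the metric with Gram matrix `G` (in the standard
basis) and the orientation which is `ε` times the standard one:  it is determined by
`γ ∧ (starG G ε β) = ⟨γ, β⟩_G · ε · √(det G) · e^{0123}`. -/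
def starG (G : Matrix (Fin 4) (Fin 4) ℝ) (ε : ℝ) (β : Form ℝ 4) : Form ℝ 4 :=
  fun t => (signMerge tᶜ t : ℝ) * ε * Real.sqrt G.det * innerG2 G⁻¹ (indF tᶜ) β

/-- The real 2-form `γ^B` with `F_∇^B = √-1 γ^B`, i.e.
`γ^B = Σ_{i,j} (∂A^j/∂x^i) dx^i ∧ dx^j`. -/
def gammaB8 (A : (Fin 4 → ℝ) → (Fin 4 → ℝ)) (x : Fin 4 → ℝ) : Form ℝ 8 :=
  ∑ i : Fin 4, ∑ j : Fin 4, pd A x i j • wedge (e1 (xi i)) (e1 (xi j))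

/-- The `√-1 ℝ`-valued curvature `F_∇^B = √-1 Σ_{i,j} (∂A^j/∂x^i) dx^i ∧ dx^j`. -/
def FB8 (A : (Fin 4 → ℝ) → (Fin 4 → ℝ)) (x : Fin 4 → ℝ) : Form ℂ 8 :=
  fun s => Complex.I * (gammaB8 A x s : ℂ)

/-- The real 2-form `β = -√-1 F_∇^B` regarded as a 2-form on `ℝ⁴ ⊇ B`. -/
def beta4 (A : (Fin 4 → ℝ) → (Fin 4 → ℝ)) (x : Fin 4 → ℝ) : Form ℝ 4 :=
  ∑ i : Fin 4, ∑ j : Fin 4, pd A x i j • wedge (e1 i) (e1 j)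

/-- The Gram matrix `g_{ij} = ⟨v_i, v_j⟩` of the metric induced on the graph of `f`. -/
def gram8 (f : (Fin 4 → ℝ) → (Fin 4 → ℝ)) (x : Fin 4 → ℝ) : Matrix (Fin 4) (Fin 4) ℝ :=
  Matrix.of fun i j => ∑ k, vG f x i k * vG f x j k

/-- The sign `sign (Φ(v₀,v₁,v₂,v₃))` fixing the orientation which makes the graph Cayley. -/
def eps8 (f : (Fin 4 → ℝ) → (Fin 4 → ℝ)) (x : Fin 4 → ℝ) : ℝ :=
  Real.sign (evalForm Phi8 (fun j => vG f x j))


set_option linter.unusedSectionVars false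

/-! ### Integer tables -/

def sgZ {n : ℕ} (s t : Finset (Fin n)) : ℤ :=
  (-1 : ℤ) ^ (((s ×ˢ t).filter (fun p => p.2 < p.1)).card)

theorem signMerge_eq (s t : Finset (Fin n)) : (signMerge s t : K) = (sgZ s t : K) := by
  simp [signMerge, sgZ]

def Lz {n : ℕ} (T : List (Finset (Fin n) × ℤ)) (S : Finset (Fin n)) : ℤ :=
  (T.map fun p => if p.1 = S then p.2 else 0).sum

def evE {n : ℕ} (T : List (Finset (Fin n) × ℤ)) (α : Form K n) : K :=
  (T.map fun p => (p.2 : K) * α p.1).sum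

theorem sum_Lz (T : List (Finset (Fin n) × ℤ)) (α : Form K n) :
    ∑ S, (Lz T S : K) * α S = evE T α := by
  induction T with
  | nil => simp [Lz, evE]
  | cons p T ih =>
    have h : ∀ S, (Lz (p :: T) S : K) * α S
        = (if p.1 = S then (p.2 : K) * α S else 0) + (Lz T S : K) * α S := by
      intro S
      simp only [Lz, List.map_cons, List.sum_cons, Int.cast_add]
      split_ifs <;> simp [add_mul]
    simp only [h, Finset.sum_add_distrib, ih]
    simp [evE]

def T2 : Fin 7 → List (Finset (Fin 8) × ℤ) := ![
  [({0,1},1), ({2,3},1), ({4,5},1), ({6,7},1)],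
  [({0,2},1), ({1,3},-1), ({4,6},1), ({5,7},-1)],
  [({0,3},1), ({1,2},1), ({4,7},-1), ({5,6},-1)],
  [({0,4},1), ({1,5},-1), ({2,6},-1), ({3,7},1)],
  [({0,5},1), ({1,4},1), ({2,7},1), ({3,6},1)],
  [({0,6},1), ({1,7},-1), ({2,4},1), ({3,5},-1)],
  [({0,7},1), ({1,6},1), ({2,5},-1), ({3,4},-1)]]

def T4 : Fin 7 → List (Finset (Fin 8) × ℤ) := ![
  [({0,2,4,7},-1), ({0,2,5,6},-1), ({0,3,4,6},-1), ({0,3,5,7},1), ({1,2,4,6},-1), ({1,2,5,7},1), ({1,3,4,7},1), ({1,3,5,6},1)],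
  [({0,1,4,7},1), ({0,1,5,6},1), ({0,3,4,5},1), ({0,3,6,7},1), ({1,2,4,5},1), ({1,2,6,7},1), ({2,3,4,7},1), ({2,3,5,6},1)],
  [({0,1,4,6},1), ({0,1,5,7},-1), ({0,2,4,5},-1), ({0,2,6,7},-1), ({1,3,4,5},1), ({1,3,6,7},1), ({2,3,4,6},1), ({2,3,5,7},-1)],
  [({0,1,2,7},-1), ({0,1,3,6},-1), ({0,2,3,5},1), ({0,5,6,7},1), ({1,2,3,4},1), ({1,4,6,7},1), ({2,4,5,7},-1), ({3,4,5,6},-1)],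
  [({0,1,2,6},-1), ({0,1,3,7},1), ({0,2,3,4},-1), ({0,4,6,7},-1), ({1,2,3,5},1), ({1,5,6,7},1), ({2,4,5,6},-1), ({3,4,5,7},1)],
  [({0,1,2,5},1), ({0,1,3,4},1), ({0,2,3,7},1), ({0,4,5,7},1), ({1,2,3,6},1), ({1,4,5,6},1), ({2,5,6,7},1), ({3,4,6,7},1)],
  [({0,1,2,4},1), ({0,1,3,5},-1), ({0,2,3,6},-1), ({0,4,5,6},-1), ({1,2,3,7},1), ({1,4,5,7},1), ({2,4,6,7},1), ({3,5,6,7},-1)]]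

def TPhi : List (Finset (Fin 8) × ℤ) :=
  [({0,1,2,3},1), ({0,1,4,5},1), ({0,1,6,7},1), ({0,2,4,6},1), ({0,2,5,7},-1), ({0,3,4,7},-1), ({0,3,5,6},-1), ({1,2,4,7},-1), ({1,2,5,6},-1), ({1,3,4,6},-1), ({1,3,5,7},1), ({2,3,4,5},1), ({2,3,6,7},1), ({4,5,6,7},1)]

def phiZ (s : Finset (Fin 8)) : ℤ :=
  if s = ({1, 2, 3} : Finset (Fin 8)) then 1
  else if s = ({1, 4, 5} : Finset (Fin 8)) then 1
  else if s = ({1, 6, 7} : Finset (Fin 8)) then 1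
  else if s = ({2, 4, 6} : Finset (Fin 8)) then 1
  else if s = ({2, 5, 7} : Finset (Fin 8)) then -1
  else if s = ({3, 4, 7} : Finset (Fin 8)) then -1
  else if s = ({3, 5, 6} : Finset (Fin 8)) then -1
  else 0

def psiZ (s : Finset (Fin 8)) : ℤ :=
  if s = ({4, 5, 6, 7} : Finset (Fin 8)) then 1
  else if s = ({2, 3, 6, 7} : Finset (Fin 8)) then 1
  else if s = ({2, 3, 4, 5} : Finset (Fin 8)) then 1
  else if s = ({1, 3, 5, 7} : Finset (Fin 8)) then 1
  else if s = ({1, 3, 4, 6} : Finset (Fin 8)) then -1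
  else if s = ({1, 2, 5, 6} : Finset (Fin 8)) then -1
  else if s = ({1, 2, 4, 7} : Finset (Fin 8)) then -1
  else 0

theorem phi8_eq (s : Finset (Fin 8)) : (phi8 s : K) = (phiZ s : K) := by
  unfold phi8 phiZ; split_ifs <;> simp

theorem psi8_eq (s : Finset (Fin 8)) : (psi8 s : K) = (psiZ s : K) := by
  unfold psi8 psiZ; split_ifs <;> simp

theorem wedge_e1 (i : Fin n) (β : Form K n) (S : Finset (Fin n)) :
    wedge (e1 i) β S = if i ∈ S then (sgZ {i} (S \ {i}) : K) * β (S \ {i}) else 0 := by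
  unfold wedge
  by_cases h : i ∈ S
  · rw [if_pos h, Finset.sum_eq_single {i}]
    · simp [e1, signMerge_eq]
    · intro s _ hs
      simp [e1, hs]
    · intro h2; simp [h] at h2
  · rw [if_neg h]
    apply Finset.sum_eq_zero
    intro s hs
    have : s ≠ {i} := by
      rintro rfl; simp [h] at hs
    simp [e1, this]

def wZ (i : Fin 8) (β : Finset (Fin 8) → ℤ) (S : Finset (Fin 8)) : ℤ :=
  if i ∈ S then sgZ {i} (S \ {i}) * β (S \ {i}) else 0

def iZ (μ : Fin 8) (β : Finset (Fin 8) → ℤ) (t : Finset (Fin 8)) : ℤ :=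
  if μ ∈ t then 0 else (-1 : ℤ) ^ ((t.filter (fun j => j < μ)).card) * β (insert μ t)

theorem wedge_e1_Z (i : Fin 8) (β : Form K 8) (b : Finset (Fin 8) → ℤ)
    (h : ∀ s, β s = (b s : K)) (S : Finset (Fin 8)) :
    wedge (e1 i) β S = (wZ i b S : K) := by
  rw [wedge_e1, wZ, h]; split_ifs <;> simp

theorem iprod_Z (μ : Fin 8) (β : Form K 8) (b : Finset (Fin 8) → ℤ)
    (h : ∀ s, β s = (b s : K)) (S : Finset (Fin 8)) :
    iprod (sharp1 (e1 μ)) β S = (iZ μ b S : K) := by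
  unfold iprod
  rw [Finset.sum_eq_single μ]
  · simp only [sharp1, e1, iprodB, iZ, h]; split_ifs <;> simp_all
  · intro ν _ hν
    simp [sharp1, e1, hν]
  · simp

set_option maxRecDepth 100000 in
theorem T4_table : ∀ μ : Fin 7, ∀ S : Finset (Fin 8),
    wZ 0 (iZ μ.succ psiZ) S - wZ μ.succ phiZ S = Lz (T4 μ) S := by
  decide +kernel

set_option maxRecDepth 100000 in
theorem TPhi_table : ∀ S : Finset (Fin 8), wZ 0 phiZ S + psiZ S = Lz TPhi S := by
  decide +kernel

theorem lambda4_eq (μ : Fin 7) (S : Finset (Fin 8)) :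
    (lambda4 (e1 μ.succ) S : K) = (algebraMap ℝ K (Real.sqrt 8))⁻¹ * (Lz (T4 μ) S : K) := by
  rw [← T4_table]
  simp only [lambda4, Pi.smul_apply, Pi.sub_apply, smul_eq_mul]
  rw [wedge_e1_Z μ.succ phi8 phiZ phi8_eq, wedge_e1_Z 0 _ _ (iprod_Z μ.succ psi8 psiZ psi8_eq)]
  push_cast; rfl

theorem Phi8_eq (S : Finset (Fin 8)) : (Phi8 S : K) = (Lz TPhi S : K) := by
  rw [← TPhi_table]
  simp only [Phi8, Pi.add_apply]
  rw [wedge_e1_Z 0 phi8 phiZ phi8_eq, psi8_eq]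
  push_cast; rfl

def rep4 : Fin 7 → Finset (Fin 8) :=
  ![{0,3,5,7}, {0,3,6,7}, {0,2,4,5}, {0,5,6,7}, {0,4,6,7}, {0,4,5,7}, {0,4,5,6}]

theorem rep4_table : ∀ μ ν : Fin 7, μ ≠ ν → Lz (T4 ν) (rep4 μ) = 0 := by decide +kernel
theorem rep4_table' : ∀ μ : Fin 7, Lz (T4 μ) (rep4 μ) ≠ 0 := by decide +kernel

theorem sum_lambda4_zero [CharZero K] (c : Fin 7 → K) :
    (∑ μ : Fin 7, c μ • (lambda4 (e1 μ.succ) : Form K 8)) = 0 ↔ ∀ μ, c μ = 0 := by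
  constructor
  · intro h μ
    have h1 := congrFun h (rep4 μ)
    simp only [Finset.sum_apply, Pi.smul_apply, smul_eq_mul, lambda4_eq, Pi.zero_apply] at h1
    rw [Finset.sum_eq_single μ] at h1
    · have h8 : (algebraMap ℝ K (Real.sqrt 8)) ≠ 0 := by
        rw [Ne, map_eq_zero]; positivity
      have := rep4_table' μ
      have h3 : (Lz (T4 μ) (rep4 μ) : K) ≠ 0 := by exact_mod_cast this
      rcases mul_eq_zero.1 h1 with h | h
      · exact h
      · rcases mul_eq_zero.1 h with h | h
        · exact absurd (inv_eq_zero.1 h) h8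
        · exact absurd h h3
    · intro ν _ hν
      rw [rep4_table μ ν hν.symm]; simp
    · simp
  · intro h; simp [h]

theorem pi47_zero [CharZero K] (β : Form K 8) :
    pi47 β = 0 ↔ ∀ μ, evE (T4 μ) β = 0 := by
  unfold pi47
  rw [sum_lambda4_zero]
  apply forall_congr'; intro μ
  have h8 : (algebraMap ℝ K (Real.sqrt 8)) ≠ 0 := by
    rw [Ne, map_eq_zero]; positivity
  have : inner' β (lambda4 (e1 μ.succ)) = (algebraMap ℝ K (Real.sqrt 8))⁻¹ * evE (T4 μ) β := by
    rw [← sum_Lz, inner', Finset.mul_sum]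
    apply Finset.sum_congr rfl; intro S _
    rw [lambda4_eq]; ring
  rw [this]; simp [h8]

def Dv {n k : ℕ} (v : Fin k → (Fin n → ℝ)) (s : Finset (Fin n)) : ℝ :=
  if h : s.card = k then
      Matrix.det (Matrix.of fun i j => v i ((s.orderIsoOfFin h j : Fin n))) else 0

theorem tau4_zero (v : Fin 4 → (Fin 8 → ℝ)) :
    tau4 v = 0 ↔ ∀ μ, evE (T4 μ) (Dv v) = 0 := by
  unfold tau4
  rw [sum_lambda4_zero]
  apply forall_congr'; intro μ
  have h8 : (Real.sqrt 8) ≠ 0 := by positivity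
  have : evalForm (lambda4 (e1 μ.succ)) v = (Real.sqrt 8)⁻¹ * evE (T4 μ) (Dv v) := by
    rw [← sum_Lz, evalForm, Finset.mul_sum]
    apply Finset.sum_congr rfl; intro S _
    rw [lambda4_eq, mul_assoc]; rfl
  rw [this]; simp [h8]

theorem evalPhi (v : Fin 4 → (Fin 8 → ℝ)) : evalForm Phi8 v = evE TPhi (Dv v) := by
  rw [← sum_Lz, evalForm]
  apply Finset.sum_congr rfl; intro S _
  rw [Phi8_eq]; rfl

def zc (t r : Finset (Fin 8)) : ℤ :=
  (if r = t then 1 else 0) +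
    (if r ⊆ tᶜ then sgZ tᶜ t * (sgZ (tᶜ \ r) r * Lz TPhi (tᶜ \ r)) else 0)

set_option maxRecDepth 100000 in
theorem zc_table : ∀ t ∈ Finset.powersetCard 2 (Finset.univ : Finset (Fin 8)),
    ∀ r ∈ Finset.powersetCard 2 (Finset.univ : Finset (Fin 8)),
    zc t r = ∑ μ : Fin 7, Lz (T2 μ) t * Lz (T2 μ) r := by
  decide +kernel

set_option maxRecDepth 100000 in
theorem TPhi_card : ∀ S : Finset (Fin 8), S.card ≠ 4 → Lz TPhi S = 0 := by
  decide +kernel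

set_option maxRecDepth 100000 in
theorem T2_card : ∀ μ, ∀ S : Finset (Fin 8), S.card ≠ 2 → Lz (T2 μ) S = 0 := by
  decide +kernel

theorem zc_eq (t r : Finset (Fin 8)) (hr : r.card = 2) :
    zc t r = ∑ μ : Fin 7, Lz (T2 μ) t * Lz (T2 μ) r := by
  by_cases ht : t.card = 2
  · exact zc_table t (by simp [Finset.mem_powersetCard, ht]) r (by simp [Finset.mem_powersetCard, hr])
  · have h1 : r ≠ t := by rintro rfl; exact ht hr
    simp only [T2_card _ _ ht, zc, if_neg h1]
    simp only [zero_mul, Finset.sum_const_zero, zero_add]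
    split_ifs with h
    · rw [TPhi_card]
      · simp
      · rw [Finset.card_sdiff_of_subset h, Finset.card_compl, Fintype.card_fin, hr]
        have := Finset.card_le_univ t
        simp at this
        omega
    · rfl

theorem pi27_apply (α : Form K 8) (hα : isGrade 2 α) (t : Finset (Fin 8)) :
    α t + hstar (wedge Phi8 α) t = ∑ μ : Fin 7, (Lz (T2 μ) t : K) * evE (T2 μ) α := by
  have h1 : α t + hstar (wedge Phi8 α) t = ∑ r, (zc t r : K) * α r := by
    have e1 : ∀ r, (zc t r : K) * α r = (if r = t then α r else 0) +
        (if r ⊆ tᶜ then (sgZ tᶜ t : K) * ((sgZ (tᶜ \ r) r : K) * (Lz TPhi (tᶜ \ r) : K) * α r) else 0) := by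
      intro r
      simp only [zc]
      split_ifs <;> push_cast <;> ring
    simp only [e1, Finset.sum_add_distrib]
    congr 1
    · simp
    · simp only [hstar, wedge, signMerge_eq, Phi8_eq]
      rw [← Finset.sum_filter, ← Finset.mul_sum]
      congr 1
      refine Finset.sum_nbij' (fun s => tᶜ \ s) (fun s => tᶜ \ s) ?_ ?_ ?_ ?_ ?_
      · intro s hs; simp
      · intro s hs; simp
      · intro s hs
        simp only [Finset.mem_powerset] at hs
        simpa using hs
      · intro s hs
        simp only [Finset.mem_filter] at hs
        simpa using hs.2
      · intro s hs
        simp only [Finset.mem_powerset] at hs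
        have : tᶜ \ (tᶜ \ s) = s := by simpa using hs
        simp only [this]
  rw [h1]
  have h2 : ∀ r, (zc t r : K) * α r = ∑ μ : Fin 7, (Lz (T2 μ) t : K) * ((Lz (T2 μ) r : K) * α r) := by
    intro r
    by_cases hr : r.card = 2
    · rw [zc_eq t r hr]; push_cast; rw [Finset.sum_mul]
      exact Finset.sum_congr rfl fun _ _ => by ring
    · simp [hα r hr]
  simp only [h2]
  rw [Finset.sum_comm]
  apply Finset.sum_congr rfl; intro μ _
  rw [← Finset.mul_sum, sum_Lz]

theorem rep2_table : ∀ μ ν : Fin 7, Lz (T2 ν) {0, μ.succ} = if ν = μ then 1 else 0 := by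
  decide +kernel

theorem pi27_zero [CharZero K] (α : Form K 8) (hα : isGrade 2 α) :
    pi27 α = 0 ↔ ∀ μ, evE (T2 μ) α = 0 := by
  have h4 : (4 : K)⁻¹ ≠ 0 := by simp
  unfold pi27
  rw [smul_eq_zero, or_iff_right h4]
  constructor
  · intro h μ
    have := congrFun h {0, μ.succ}
    rw [Pi.add_apply, pi27_apply α hα] at this
    simpa [rep2_table] using this
  · intro h
    funext t
    rw [Pi.add_apply, pi27_apply α hα]
    simp [h]


/-! ### Explicit evaluation of wedge powers and determinants -/

theorem sgZ_map {k n : ℕ} (g : Fin k ↪o Fin n) (s t : Finset (Fin k)) :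
    sgZ (s.map g.toEmbedding) (t.map g.toEmbedding) = sgZ s t := by
  unfold sgZ
  congr 1
  rw [← Finset.card_map (g.toEmbedding.prodMap g.toEmbedding)]
  congr 1
  ext ⟨a, b⟩
  simp only [Finset.mem_filter, Finset.mem_product, Finset.mem_map, Function.Embedding.prodMap,
    Prod.exists, Function.Embedding.coeFn_mk, Prod.map_apply, Prod.mk.injEq]
  constructor
  · rintro ⟨⟨⟨c, hc, rfl⟩, ⟨d, hd, rfl⟩⟩, h⟩
    exact ⟨c, d, ⟨⟨hc, hd⟩, by simpa using h⟩, rfl, rfl⟩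
  · rintro ⟨c, d, ⟨⟨hc, hd⟩, h⟩, rfl, rfl⟩
    exact ⟨⟨⟨c, hc, rfl⟩, ⟨d, hd, rfl⟩⟩, by simpa using h⟩

theorem wedge_map {k n : ℕ} (g : Fin k ↪o Fin n) (α β : Form ℝ n) (u : Finset (Fin k)) :
    wedge α β (u.map g.toEmbedding)
      = wedge (fun s => α (s.map g.toEmbedding)) (fun s => β (s.map g.toEmbedding)) u := by
  unfold wedge
  symm
  refine Finset.sum_bij (fun s _ => s.map g.toEmbedding) ?_ ?_ ?_ ?_
  · intro s hs
    simp only [Finset.mem_powerset] at *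
    exact Finset.map_subset_map.2 hs
  · intro s _ t _ h
    exact Finset.map_injective _ h
  · intro t ht
    simp only [Finset.mem_powerset] at ht
    obtain ⟨s, hs, rfl⟩ := Finset.subset_map_iff.1 ht
    exact ⟨s, by simpa using hs, rfl⟩
  · intro s hs
    rw [← Finset.map_sdiff, signMerge_eq, signMerge_eq, sgZ_map]

/-- list of the two-element subsets of a finite set of indices, with their signs -/
theorem wedge_grade2 {n : ℕ} (α β : Form ℝ n) (hα : isGrade 2 α) (u : Finset (Fin n)) :
    wedge α β u = ∑ s ∈ u.powersetCard 2, (sgZ s (u \ s) : ℝ) * α s * β (u \ s) := by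
  unfold wedge
  simp only [signMerge_eq]
  symm
  apply Finset.sum_subset
  · intro s hs
    simp only [Finset.mem_powersetCard] at hs
    simpa using hs.1
  · intro s hs h
    have : s.card ≠ 2 := by
      intro hc; apply h
      simp only [Finset.mem_powerset] at hs
      simp [Finset.mem_powersetCard, hs, hc]
    simp [hα s this]

def L4 : List (Finset (Fin 4)) := [{0,1},{0,2},{0,3},{1,2},{1,3},{2,3}]
def L6 : List (Finset (Fin 6)) :=
  [{0,1},{0,2},{0,3},{0,4},{0,5},{1,2},{1,3},{1,4},{1,5},{2,3},{2,4},{2,5},{3,4},{3,5},{4,5}]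

theorem wedge_univ4 (α β : Form ℝ 4) (hα : isGrade 2 α) :
    wedge α β Finset.univ = α {0,1} * β {2,3} - α {0,2} * β {1,3} + α {0,3} * β {1,2}
      + α {1,2} * β {0,3} - α {1,3} * β {0,2} + α {2,3} * β {0,1} := by
  rw [wedge_grade2 α β hα]
  have h1 : (Finset.univ : Finset (Fin 4)).powersetCard 2 = L4.toFinset := by decide +kernel
  have h2 : L4.Nodup := by decide +kernel
  rw [h1, List.sum_toFinset _ h2]
  simp only [L4, List.map_cons, List.map_nil, List.sum_cons, List.sum_nil]
  simp only [show (Finset.univ : Finset (Fin 4)) \ {0,1} = {2,3} by decide,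
    show (Finset.univ : Finset (Fin 4)) \ {0,2} = {1,3} by decide,
    show (Finset.univ : Finset (Fin 4)) \ {0,3} = {1,2} by decide,
    show (Finset.univ : Finset (Fin 4)) \ {1,2} = {0,3} by decide,
    show (Finset.univ : Finset (Fin 4)) \ {1,3} = {0,2} by decide,
    show (Finset.univ : Finset (Fin 4)) \ {2,3} = {0,1} by decide,
    show sgZ ({0,1} : Finset (Fin 4)) {2,3} = 1 by decide,
    show sgZ ({0,2} : Finset (Fin 4)) {1,3} = -1 by decide,
    show sgZ ({0,3} : Finset (Fin 4)) {1,2} = 1 by decide,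
    show sgZ ({1,2} : Finset (Fin 4)) {0,3} = 1 by decide,
    show sgZ ({1,3} : Finset (Fin 4)) {0,2} = -1 by decide,
    show sgZ ({2,3} : Finset (Fin 4)) {0,1} = 1 by decide]
  push_cast; ring

theorem isGrade_map {k n : ℕ} (g : Fin k ↪o Fin n) (α : Form ℝ n) (d : ℕ) (hα : isGrade d α) :
    isGrade d (fun s : Finset (Fin k) => α (s.map g.toEmbedding)) := by
  intro s hs
  exact hα _ (by simpa using hs)

def emb4 {n : ℕ} (i j k l : Fin n) (h1 : i < j) (h2 : j < k) (h3 : k < l) : Fin 4 ↪o Fin n :=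
  OrderEmbedding.ofStrictMono ![i, j, k, l] (by
    rw [Fin.strictMono_iff_lt_succ]
    intro a; fin_cases a <;> simpa)

theorem wedge_sq {n : ℕ} (α : Form ℝ n) (hα : isGrade 2 α) (i j k l : Fin n)
    (h1 : i < j) (h2 : j < k) (h3 : k < l) :
    wedge α α {i,j,k,l} = 2 * (α {i,j} * α {k,l} - α {i,k} * α {j,l} + α {i,l} * α {j,k}) := by
  have h := wedge_map (emb4 i j k l h1 h2 h3) α α Finset.univ
  have hu : (Finset.univ : Finset (Fin 4)).map (emb4 i j k l h1 h2 h3).toEmbedding = {i,j,k,l} := by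
    rw [show (Finset.univ : Finset (Fin 4)) = {0,1,2,3} by decide]
    simp [Finset.map_insert, emb4]
  rw [hu, wedge_univ4 _ _ (isGrade_map _ _ _ hα)] at h
  rw [h]
  simp [Finset.map_insert, emb4]
  ring

theorem wedge_cube6 (α : Form ℝ 6) (hα : isGrade 2 α) :
    wedge α (wedge α α) Finset.univ = 6 * (
      α {0,1} * (α {2,3} * α {4,5} - α {2,4} * α {3,5} + α {2,5} * α {3,4})
      - α {0,2} * (α {1,3} * α {4,5} - α {1,4} * α {3,5} + α {1,5} * α {3,4})
      + α {0,3} * (α {1,2} * α {4,5} - α {1,4} * α {2,5} + α {1,5} * α {2,4})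
      - α {0,4} * (α {1,2} * α {3,5} - α {1,3} * α {2,5} + α {1,5} * α {2,3})
      + α {0,5} * (α {1,2} * α {3,4} - α {1,3} * α {2,4} + α {1,4} * α {2,3})) := by
  rw [wedge_grade2 α _ hα]
  have h1 : (Finset.univ : Finset (Fin 6)).powersetCard 2 = L6.toFinset := by decide +kernel
  have h2 : L6.Nodup := by decide +kernel
  rw [h1, List.sum_toFinset _ h2]
  simp only [L6, List.map_cons, List.map_nil, List.sum_cons, List.sum_nil]
  have key : ∀ (a b i j k l : Fin 6) (z : ℤ) (h1 : i < j) (h2 : j < k) (h3 : k < l),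
      Finset.univ \ {a, b} = ({i,j,k,l} : Finset (Fin 6)) →
      sgZ {a,b} ({i,j,k,l} : Finset (Fin 6)) = z →
      (sgZ {a,b} (Finset.univ \ {a,b}) : ℝ) * α {a,b} * wedge α α (Finset.univ \ {a, b})
       = z * α {a,b} * (2 * (α {i,j} * α {k,l} - α {i,k} * α {j,l} + α {i,l} * α {j,k})) := by
    intro a b i j k l z h1 h2 h3 hu hz
    rw [hu, hz, wedge_sq α hα i j k l h1 h2 h3]
  rw [key 0 1 2 3 4 5 1 (by decide) (by decide) (by decide) (by decide) (by decide),
    key 0 2 1 3 4 5 (-1) (by decide) (by decide) (by decide) (by decide) (by decide),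
    key 0 3 1 2 4 5 1 (by decide) (by decide) (by decide) (by decide) (by decide),
    key 0 4 1 2 3 5 (-1) (by decide) (by decide) (by decide) (by decide) (by decide),
    key 0 5 1 2 3 4 1 (by decide) (by decide) (by decide) (by decide) (by decide),
    key 1 2 0 3 4 5 1 (by decide) (by decide) (by decide) (by decide) (by decide),
    key 1 3 0 2 4 5 (-1) (by decide) (by decide) (by decide) (by decide) (by decide),
    key 1 4 0 2 3 5 1 (by decide) (by decide) (by decide) (by decide) (by decide),
    key 1 5 0 2 3 4 (-1) (by decide) (by decide) (by decide) (by decide) (by decide),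
    key 2 3 0 1 4 5 1 (by decide) (by decide) (by decide) (by decide) (by decide),
    key 2 4 0 1 3 5 (-1) (by decide) (by decide) (by decide) (by decide) (by decide),
    key 2 5 0 1 3 4 1 (by decide) (by decide) (by decide) (by decide) (by decide),
    key 3 4 0 1 2 5 1 (by decide) (by decide) (by decide) (by decide) (by decide),
    key 3 5 0 1 2 4 (-1) (by decide) (by decide) (by decide) (by decide) (by decide),
    key 4 5 0 1 2 3 1 (by decide) (by decide) (by decide) (by decide) (by decide)]
  push_cast; ring

theorem wedge_cube {n : ℕ} (α : Form ℝ n) (hα : isGrade 2 α) (a b c d e f : Fin n)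
    (h1 : a < b) (h2 : b < c) (h3 : c < d) (h4 : d < e) (h5 : e < f) :
    wedge α (wedge α α) {a,b,c,d,e,f} = 6 * (
      α {a,b} * (α {c,d} * α {e,f} - α {c,e} * α {d,f} + α {c,f} * α {d,e})
      - α {a,c} * (α {b,d} * α {e,f} - α {b,e} * α {d,f} + α {b,f} * α {d,e})
      + α {a,d} * (α {b,c} * α {e,f} - α {b,e} * α {c,f} + α {b,f} * α {c,e})
      - α {a,e} * (α {b,c} * α {d,f} - α {b,d} * α {c,f} + α {b,f} * α {c,d})
      + α {a,f} * (α {b,c} * α {d,e} - α {b,d} * α {c,e} + α {b,e} * α {c,d})) := by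
  let g : Fin 6 ↪o Fin n := OrderEmbedding.ofStrictMono ![a,b,c,d,e,f] (by
    rw [Fin.strictMono_iff_lt_succ]
    intro a; fin_cases a <;> simpa)
  have h := wedge_map g α (wedge α α) Finset.univ
  have hu : (Finset.univ : Finset (Fin 6)).map g.toEmbedding = {a,b,c,d,e,f} := by
    rw [show (Finset.univ : Finset (Fin 6)) = {0,1,2,3,4,5} by decide]
    simp [Finset.map_insert, g]
  have hw : (fun s : Finset (Fin 6) => wedge α α (s.map g.toEmbedding))
      = wedge (fun s => α (s.map g.toEmbedding)) (fun s => α (s.map g.toEmbedding)) :=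
    funext fun s => wedge_map g α α s
  rw [hu, hw, wedge_cube6 _ (isGrade_map _ _ _ hα)] at h
  rw [h]
  simp [Finset.map_insert, g]

theorem isGrade_wedge {n : ℕ} (α β : Form ℝ n) (p q : ℕ) (hα : isGrade p α) (hβ : isGrade q β) :
    isGrade (p + q) (wedge α β) := by
  intro u hu
  apply Finset.sum_eq_zero
  intro s hs
  simp only [Finset.mem_powerset] at hs
  by_cases h : s.card = p
  · have : (u \ s).card ≠ q := by
      rw [Finset.card_sdiff_of_subset hs]
      have := Finset.card_le_card hs
      omega
    simp [hβ _ this]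
  · simp [hα _ h]

theorem isGrade_hstar (α : Form ℝ 8) (hα : isGrade 6 α) : isGrade 2 (hstar α) := by
  intro u hu
  have : uᶜ.card ≠ 6 := by
    rw [Finset.card_compl]; simp; omega
  simp [hstar, hα _ this]

theorem Dv_map {k n : ℕ} (g : Fin k ↪o Fin n) (v : Fin k → (Fin n → ℝ)) :
    Dv v (Finset.univ.map g.toEmbedding) = Matrix.det (Matrix.of fun i j => v i (g j)) := by
  have h : (Finset.univ.map g.toEmbedding).card = k := by simp
  rw [Dv, dif_pos h]
  have : ∀ j, (((Finset.univ.map g.toEmbedding).orderIsoOfFin h j : _) : Fin n) = g j := by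
    intro j
    rw [Finset.coe_orderIsoOfFin_apply]
    have := Finset.orderEmbOfFin_unique h (f := g) (by intro x; simp) g.strictMono
    rw [← this]
  simp only [this]

theorem Dv4 {n : ℕ} (v : Fin 4 → (Fin n → ℝ)) (i j k l : Fin n)
    (h1 : i < j) (h2 : j < k) (h3 : k < l) :
    Dv v {i,j,k,l} = Matrix.det !![v 0 i, v 0 j, v 0 k, v 0 l; v 1 i, v 1 j, v 1 k, v 1 l;
      v 2 i, v 2 j, v 2 k, v 2 l; v 3 i, v 3 j, v 3 k, v 3 l] := by
  have h := Dv_map (emb4 i j k l h1 h2 h3) v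
  have hu : (Finset.univ : Finset (Fin 4)).map (emb4 i j k l h1 h2 h3).toEmbedding = {i,j,k,l} := by
    rw [show (Finset.univ : Finset (Fin 4)) = {0,1,2,3} by decide]
    simp [Finset.map_insert, emb4]
  rw [hu] at h
  rw [h]
  congr 1
  ext a b
  fin_cases a <;> fin_cases b <;> rfl

theorem det4 (a b c d e f g h i j k l m n o p : ℝ) :
    Matrix.det !![a,b,c,d;e,f,g,h;i,j,k,l;m,n,o,p] =
     (a*f-b*e)*(k*p-l*o) - (a*g-c*e)*(j*p-l*n) + (a*h-d*e)*(j*o-k*n)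
     + (b*g-c*f)*(i*p-l*m) - (b*h-d*f)*(i*o-k*m) + (c*h-d*g)*(i*n-j*m) := by
  rw [Matrix.det_succ_row_zero]
  simp [Fin.sum_univ_succ, Matrix.det_fin_three, Fin.succAbove]
  ring

theorem minor2_eq (H : Matrix (Fin 4) (Fin 4) ℝ) (i j k l : Fin 4) (h1 : i < j) (h2 : k < l) :
    minor2 H {i,j} {k,l} = H i k * H j l - H i l * H j k := by
  have hc : ∀ {i j : Fin 4}, i < j → ({i,j} : Finset (Fin 4)).card = 2 :=
    fun h => Finset.card_pair h.ne
  have ho : ∀ {i j : Fin 4} (h : i < j) (a : Fin 2),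
      ({i,j} : Finset (Fin 4)).orderEmbOfFin (hc h) a = ![i,j] a := by
    intro i j h a
    have := Finset.orderEmbOfFin_unique (hc h) (f := ![i,j]) (by intro x; fin_cases x <;> simp)
      (by rw [Fin.strictMono_iff_lt_succ]; intro a; fin_cases a; simpa)
    rw [← this]
  rw [minor2, dif_pos (hc h1), dif_pos (hc h2)]
  simp only [Matrix.det_fin_two, Matrix.of_apply, Finset.coe_orderIsoOfFin_apply]
  rw [ho h1, ho h2, ho h1, ho h2]
  simp


def d2 (m : Fin 4 → Fin 4 → ℝ) (i j a b : Fin 4) : ℝ := m i a * m j b - m i b * m j a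

def d3 (m : Fin 4 → Fin 4 → ℝ) (i j k a b c : Fin 4) : ℝ :=
  m i a * d2 m j k b c - m i b * d2 m j k a c + m i c * d2 m j k a b

def d4 (m : Fin 4 → Fin 4 → ℝ) (i j k l a b c d : Fin 4) : ℝ :=
  m i a * d3 m j k l b c d - m i b * d3 m j k l a c d + m i c * d3 m j k l a b d
    - m i d * d3 m j k l a b c

def Tt (m : Fin 4 → Fin 4 → ℝ) : Fin 7 → ℝ := ![
  d2 m 1 3 0 3 + d2 m 1 3 1 2 - d2 m 1 2 0 2 + d2 m 1 2 1 3 - d2 m 0 3 0 2 + d2 m 0 3 1 3 - d2 m 0 2 0 3 - d2 m 0 2 1 2,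
  d2 m 2 3 0 3 + d2 m 2 3 1 2 + d2 m 1 2 0 1 + d2 m 1 2 2 3 + d2 m 0 3 0 1 + d2 m 0 3 2 3 + d2 m 0 1 0 3 + d2 m 0 1 1 2,
  d2 m 2 3 0 2 - d2 m 2 3 1 3 + d2 m 1 3 0 1 + d2 m 1 3 2 3 - d2 m 0 2 0 1 - d2 m 0 2 2 3 + d2 m 0 1 0 2 - d2 m 0 1 1 3,
  -m 3 3 + m 2 2 + m 1 1 + d3 m 1 2 3 1 2 3 - m 0 0 - d3 m 0 2 3 0 2 3 - d3 m 0 1 3 0 1 3 + d3 m 0 1 2 0 1 2,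
  -m 3 2 - m 2 3 - m 1 0 - d3 m 1 2 3 0 2 3 - m 0 1 - d3 m 0 2 3 1 2 3 - d3 m 0 1 3 0 1 2 - d3 m 0 1 2 0 1 3,
  m 3 1 - m 2 0 + m 1 3 + d3 m 1 2 3 0 1 3 - m 0 2 - d3 m 0 2 3 0 1 2 + d3 m 0 1 3 1 2 3 - d3 m 0 1 2 0 2 3,
  m 3 0 + m 2 1 - m 1 2 - d3 m 1 2 3 0 1 2 - m 0 3 - d3 m 0 2 3 0 1 3 + d3 m 0 1 3 0 2 3 + d3 m 0 1 2 1 2 3]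

def PhE (m : Fin 4 → Fin 4 → ℝ) : ℝ :=
  1 + d2 m 2 3 0 1 + d2 m 2 3 2 3 - d2 m 1 3 0 2 + d2 m 1 3 1 3 - d2 m 1 2 0 3 - d2 m 1 2 1 2 - d2 m 0 3 0 3 - d2 m 0 3 1 2 + d2 m 0 2 0 2 - d2 m 0 2 1 3 + d2 m 0 1 0 1 + d2 m 0 1 2 3 + d4 m 0 1 2 3 0 1 2 3

def rho (m : Fin 4 → Fin 4 → ℝ) : Fin 7 → Fin 6 → ℝ := ![
  ![1 + d2 m 0 1 0 1 + d2 m 0 1 2 3, d2 m 0 2 0 1 + d2 m 0 2 2 3, d2 m 0 3 0 1 + d2 m 0 3 2 3, d2 m 1 2 0 1 + d2 m 1 2 2 3, d2 m 1 3 0 1 + d2 m 1 3 2 3, 1 + d2 m 2 3 0 1 + d2 m 2 3 2 3],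
  ![d2 m 0 1 0 2 - d2 m 0 1 1 3, 1 + d2 m 0 2 0 2 - d2 m 0 2 1 3, d2 m 0 3 0 2 - d2 m 0 3 1 3, d2 m 1 2 0 2 - d2 m 1 2 1 3, -1 + d2 m 1 3 0 2 - d2 m 1 3 1 3, d2 m 2 3 0 2 - d2 m 2 3 1 3],
  ![-d2 m 0 1 0 3 - d2 m 0 1 1 2, -d2 m 0 2 0 3 - d2 m 0 2 1 2, 1 - d2 m 0 3 0 3 - d2 m 0 3 1 2, 1 - d2 m 1 2 0 3 - d2 m 1 2 1 2, -d2 m 1 3 0 3 - d2 m 1 3 1 2, -d2 m 2 3 0 3 - d2 m 2 3 1 2],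
  ![m 1 0 + m 0 1, m 2 0 + m 0 2, m 3 0 - m 0 3, -m 2 1 + m 1 2, -m 3 1 - m 1 3, -m 3 2 - m 2 3],
  ![m 1 1 - m 0 0, m 2 1 - m 0 3, m 3 1 - m 0 2, m 2 0 - m 1 3, m 3 0 - m 1 2, m 3 3 - m 2 2],
  ![m 1 2 + m 0 3, m 2 2 - m 0 0, m 3 2 + m 0 1, -m 2 3 - m 1 0, -m 3 3 + m 1 1, m 3 0 + m 2 1],
  ![m 1 3 - m 0 2, m 2 3 + m 0 1, m 3 3 + m 0 0, m 2 2 + m 1 1, m 3 2 + m 1 0, -m 3 1 + m 2 0]]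

def Om (b : Fin 6 → ℝ) (m : Fin 4 → Fin 4 → ℝ) : Fin 8 → Fin 8 → ℝ := ![
  ![0, b 0, b 1, b 2, m 0 0, m 0 1, m 0 2, m 0 3],
  ![0, 0, b 3, b 4, m 1 0, m 1 1, m 1 2, m 1 3],
  ![0, 0, 0, b 5, m 2 0, m 2 1, m 2 2, m 2 3],
  ![0, 0, 0, 0, m 3 0, m 3 1, m 3 2, m 3 3],
  ![0, 0, 0, 0, 0, 0, 0, 0],
  ![0, 0, 0, 0, 0, 0, 0, 0],
  ![0, 0, 0, 0, 0, 0, 0, 0],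
  ![0, 0, 0, 0, 0, 0, 0, 0]]

def T6 : Fin 7 → List (Finset (Fin 8) × ℤ) := ![
  [({2,3,4,5,6,7},1), ({0,1,4,5,6,7},1), ({0,1,2,3,6,7},1), ({0,1,2,3,4,5},1)],
  [({1,3,4,5,6,7},-1), ({0,2,4,5,6,7},1), ({0,1,2,3,5,7},-1), ({0,1,2,3,4,6},1)],
  [({1,2,4,5,6,7},1), ({0,3,4,5,6,7},1), ({0,1,2,3,5,6},-1), ({0,1,2,3,4,7},-1)],
  [({1,2,3,5,6,7},-1), ({0,2,3,4,6,7},1), ({0,1,3,4,5,7},1), ({0,1,2,4,5,6},-1)],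
  [({1,2,3,4,6,7},1), ({0,2,3,5,6,7},1), ({0,1,3,4,5,6},1), ({0,1,2,4,5,7},1)],
  [({1,2,3,4,5,7},-1), ({0,2,3,4,5,6},1), ({0,1,3,5,6,7},-1), ({0,1,2,4,6,7},1)],
  [({1,2,3,4,5,6},1), ({0,2,3,4,5,7},1), ({0,1,3,4,6,7},-1), ({0,1,2,5,6,7},-1)]]

def Gm (m : Fin 4 → Fin 4 → ℝ) : Matrix (Fin 4) (Fin 4) ℝ :=
  Matrix.of fun i j => (if i = j then 1 else 0) + (m i 0 * m j 0 + m i 1 * m j 1 + m i 2 * m j 2 + m i 3 * m j 3)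

def prA : Fin 6 → Fin 4 := ![0,0,0,1,1,2]
def prB : Fin 6 → Fin 4 := ![1,2,3,2,3,3]

def mi (G : Matrix (Fin 4) (Fin 4) ℝ) (s t : Fin 6) : ℝ :=
  G (prA s) (prA t) * G (prB s) (prB t) - G (prA s) (prB t) * G (prB s) (prA t)

/-- the Euclidean dual of `b` -/
def cd (b : Fin 6 → ℝ) : Fin 6 → ℝ := ![b 5, -b 4, b 3, b 2, -b 1, b 0]

def Rr (b : Fin 6 → ℝ) (m : Fin 4 → Fin 4 → ℝ) (μ : Fin 7) : ℝ := ∑ t, cd b t * rho m μ t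

theorem Q_eq (b : Fin 6 → ℝ) (m : Fin 4 → Fin 4 → ℝ) (s : Fin 6) :
    ∑ μ, rho m μ s * Rr b m μ = ∑ t, cd b t * mi (Gm m) s t + PhE m * b s := by
  fin_cases s <;>
  · simp [Rr, Fin.sum_univ_succ, rho, cd, mi, prA, prB, Gm, PhE, d2, d3, d4]
    ring

theorem R_iff (b : Fin 6 → ℝ) (m : Fin 4 → Fin 4 → ℝ) :
    (∀ μ, Rr b m μ = 0) ↔ ∀ s, ∑ t, cd b t * mi (Gm m) s t + PhE m * b s = 0 := by
  constructor
  · intro h s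
    rw [← Q_eq]; simp [h]
  · intro h
    have h1 : ∑ μ, Rr b m μ * Rr b m μ = 0 := by
      have : ∑ μ, Rr b m μ * Rr b m μ = ∑ s, cd b s * ∑ μ, rho m μ s * Rr b m μ := by
        simp only [Finset.mul_sum]
        rw [Finset.sum_comm]
        apply Finset.sum_congr rfl; intro μ _
        conv_lhs => lhs; rw [Rr]
        rw [Finset.sum_mul]
        exact Finset.sum_congr rfl fun _ _ => by ring
      rw [this]
      simp only [Q_eq, h, mul_zero, Finset.sum_const_zero]
    intro μ
    have := (Finset.sum_eq_zero_iff_of_nonneg (fun μ _ => mul_self_nonneg (Rr b m μ))).1 h1 μ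
      (Finset.mem_univ _)
    simpa using this


def gs (m : Fin 4 → Fin 4 → ℝ) (i j : Fin 4) : ℝ :=
  m i 0 * m j 0 + m i 1 * m j 1 + m i 2 * m j 2 + m i 3 * m j 3

theorem gs_comm (m : Fin 4 → Fin 4 → ℝ) (i j : Fin 4) : gs m i j = gs m j i := by
  unfold gs; ring

theorem gs2 (m : Fin 4 → Fin 4 → ℝ) (i j : Fin 4) :
    gs m i i * gs m j j - gs m i j ^ 2 = d2 m i j 0 1^2 + d2 m i j 0 2^2 + d2 m i j 0 3^2 + d2 m i j 1 2^2 + d2 m i j 1 3^2 + d2 m i j 2 3^2 := by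
  simp only [gs, d2]; ring

theorem gs3 (m : Fin 4 → Fin 4 → ℝ) (i j k : Fin 4) :
    gs m i i * (gs m j j * gs m k k - gs m j k ^ 2) - gs m i j * (gs m i j * gs m k k - gs m j k * gs m i k)
      + gs m i k * (gs m i j * gs m j k - gs m j j * gs m i k)
      = d3 m i j k 0 1 2^2 + d3 m i j k 0 1 3^2 + d3 m i j k 0 2 3^2 + d3 m i j k 1 2 3^2 := by
  simp only [gs, d3, d2]; ring

theorem gs4 (m : Fin 4 → Fin 4 → ℝ) :
    Matrix.det (Matrix.of (gs m)) = d4 m 0 1 2 3 0 1 2 3 ^ 2 := by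
  have h1 : Matrix.of (gs m) = Matrix.of m * (Matrix.of m).transpose := by
    ext i j
    simp [gs, Matrix.mul_apply, Fin.sum_univ_four]
  have h2 : (Matrix.of m).det = d4 m 0 1 2 3 0 1 2 3 := by
    have h : Matrix.of m = !![m 0 0, m 0 1, m 0 2, m 0 3; m 1 0, m 1 1, m 1 2, m 1 3;
        m 2 0, m 2 1, m 2 2, m 2 3; m 3 0, m 3 1, m 3 2, m 3 3] := by
      ext i j; fin_cases i <;> fin_cases j <;> rfl
    rw [h, det4]
    simp only [d4, d3, d2]; ring
  rw [h1, Matrix.det_mul, Matrix.det_transpose, h2, sq]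

def gQ (m : Fin 4 → Fin 4 → ℝ) : ℝ :=
  d2 m 2 3 0 1 + d2 m 2 3 2 3 - d2 m 1 3 0 2 + d2 m 1 3 1 3 - d2 m 1 2 0 3 - d2 m 1 2 1 2 - d2 m 0 3 0 3 - d2 m 0 3 1 2 + d2 m 0 2 0 2 - d2 m 0 2 1 3 + d2 m 0 1 0 1 + d2 m 0 1 2 3

def gL (m : Fin 4 → Fin 4 → ℝ) : Fin 4 → ℝ := ![
  -m 3 3 + m 2 2 + m 1 1 - m 0 0, -m 3 2 - m 2 3 - m 1 0 - m 0 1,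
  m 3 1 - m 2 0 + m 1 3 - m 0 2, m 3 0 + m 2 1 - m 1 2 - m 0 3]

def gC (m : Fin 4 → Fin 4 → ℝ) : Fin 4 → ℝ := ![
  d3 m 1 2 3 1 2 3 - d3 m 0 2 3 0 2 3 - d3 m 0 1 3 0 1 3 + d3 m 0 1 2 0 1 2,
  - d3 m 1 2 3 0 2 3 - d3 m 0 2 3 1 2 3 - d3 m 0 1 3 0 1 2 - d3 m 0 1 2 0 1 3,
  d3 m 1 2 3 0 1 3 - d3 m 0 2 3 0 1 2 + d3 m 0 1 3 1 2 3 - d3 m 0 1 2 0 2 3,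
  - d3 m 1 2 3 0 1 2 - d3 m 0 2 3 0 1 3 + d3 m 0 1 3 0 2 3 + d3 m 0 1 2 1 2 3]

theorem gr2 (m : Fin 4 → Fin 4 → ℝ) : 2 * gQ m + (gL m 0 ^ 2 + gL m 1 ^ 2 + gL m 2 ^ 2 + gL m 3 ^ 2)
    = gs m 0 0 + gs m 1 1 + gs m 2 2 + gs m 3 3 := by
  simp [gQ, gL, gs, d2]; ring

theorem gr4 (m : Fin 4 → Fin 4 → ℝ) : gQ m ^ 2 + 2 * d4 m 0 1 2 3 0 1 2 3
    + (Tt m 0 ^ 2 + Tt m 1 ^ 2 + Tt m 2 ^ 2)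
    + 2 * (gL m 0 * gC m 0 + gL m 1 * gC m 1 + gL m 2 * gC m 2 + gL m 3 * gC m 3)
    = (d2 m 0 1 0 1^2 + d2 m 0 1 0 2^2 + d2 m 0 1 0 3^2 + d2 m 0 1 1 2^2 + d2 m 0 1 1 3^2 + d2 m 0 1 2 3^2
    + d2 m 0 2 0 1^2 + d2 m 0 2 0 2^2 + d2 m 0 2 0 3^2 + d2 m 0 2 1 2^2 + d2 m 0 2 1 3^2 + d2 m 0 2 2 3^2
    + d2 m 0 3 0 1^2 + d2 m 0 3 0 2^2 + d2 m 0 3 0 3^2 + d2 m 0 3 1 2^2 + d2 m 0 3 1 3^2 + d2 m 0 3 2 3^2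
    + d2 m 1 2 0 1^2 + d2 m 1 2 0 2^2 + d2 m 1 2 0 3^2 + d2 m 1 2 1 2^2 + d2 m 1 2 1 3^2 + d2 m 1 2 2 3^2
    + d2 m 1 3 0 1^2 + d2 m 1 3 0 2^2 + d2 m 1 3 0 3^2 + d2 m 1 3 1 2^2 + d2 m 1 3 1 3^2 + d2 m 1 3 2 3^2
    + d2 m 2 3 0 1^2 + d2 m 2 3 0 2^2 + d2 m 2 3 0 3^2 + d2 m 2 3 1 2^2 + d2 m 2 3 1 3^2 + d2 m 2 3 2 3^2) := by
  simp [gQ, gL, gC, Tt, d4, d3, d2]; ring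

theorem gr6 (m : Fin 4 → Fin 4 → ℝ) : 2 * gQ m * d4 m 0 1 2 3 0 1 2 3
    + (gC m 0 ^ 2 + gC m 1 ^ 2 + gC m 2 ^ 2 + gC m 3 ^ 2)
    = (d3 m 0 1 2 0 1 2^2 + d3 m 0 1 2 0 1 3^2 + d3 m 0 1 2 0 2 3^2 + d3 m 0 1 2 1 2 3^2
    + d3 m 0 1 3 0 1 2^2 + d3 m 0 1 3 0 1 3^2 + d3 m 0 1 3 0 2 3^2 + d3 m 0 1 3 1 2 3^2
    + d3 m 0 2 3 0 1 2^2 + d3 m 0 2 3 0 1 3^2 + d3 m 0 2 3 0 2 3^2 + d3 m 0 2 3 1 2 3^2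
    + d3 m 1 2 3 0 1 2^2 + d3 m 1 2 3 0 1 3^2 + d3 m 1 2 3 0 2 3^2 + d3 m 1 2 3 1 2 3^2) := by
  simp [gQ, gC, d4, d3, d2]; ring

theorem det_Gm (m : Fin 4 → Fin 4 → ℝ) : (Gm m).det = PhE m ^ 2 + ∑ μ, Tt m μ ^ 2 := by
  have hP : PhE m = 1 + gQ m + d4 m 0 1 2 3 0 1 2 3 := by unfold PhE gQ; ring
  have h3 : Tt m 3 = gL m 0 + gC m 0 := by simp [Tt, gL, gC]; ring
  have h4 : Tt m 4 = gL m 1 + gC m 1 := by simp [Tt, gL, gC]; ring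
  have h5 : Tt m 5 = gL m 2 + gC m 2 := by simp [Tt, gL, gC]; ring
  have h6 : Tt m 6 = gL m 3 + gC m 3 := by simp [Tt, gL, gC]; ring
  have hT : ∑ μ, Tt m μ ^ 2 = Tt m 0 ^ 2 + Tt m 1 ^ 2 + Tt m 2 ^ 2 + (Tt m 3 ^ 2 + Tt m 4 ^ 2
      + Tt m 5 ^ 2 + Tt m 6 ^ 2) := by
    rw [Fin.sum_univ_seven]; ring
  have hS := gs4 m
  have e1 : Matrix.of (gs m) = !![gs m 0 0, gs m 0 1, gs m 0 2, gs m 0 3; gs m 0 1, gs m 1 1, gs m 1 2, gs m 1 3;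
      gs m 0 2, gs m 1 2, gs m 2 2, gs m 2 3; gs m 0 3, gs m 1 3, gs m 2 3, gs m 3 3] := by
    ext i j; fin_cases i <;> fin_cases j <;> first | rfl | exact gs_comm _ _ _
  have e2 : Gm m = !![1 + gs m 0 0, gs m 0 1, gs m 0 2, gs m 0 3; gs m 0 1, 1 + gs m 1 1, gs m 1 2, gs m 1 3;
      gs m 0 2, gs m 1 2, 1 + gs m 2 2, gs m 2 3; gs m 0 3, gs m 1 3, gs m 2 3, 1 + gs m 3 3] := by
    have : ∀ i j, Gm m i j = (if i = j then 1 else 0) + gs m i j := fun _ _ => rfl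
    ext i j
    rw [this]
    fin_cases i <;> fin_cases j <;> simp [gs_comm m 1 0, gs_comm m 2 0, gs_comm m 3 0,
      gs_comm m 2 1, gs_comm m 3 1, gs_comm m 3 2]
  rw [e1, det4] at hS
  rw [e2, det4, hT, hP, h3, h4, h5, h6]
  linear_combination hS - gr2 m - gr4 m - gr6 m + gs2 m 0 1 + gs2 m 0 2 + gs2 m 0 3 + gs2 m 1 2 + gs2 m 1 3 + gs2 m 2 3 + gs3 m 0 1 2 + gs3 m 0 1 3 + gs3 m 0 2 3 + gs3 m 1 2 3

theorem vG_eq (f : (Fin 4 → ℝ) → (Fin 4 → ℝ)) (x : Fin 4 → ℝ) (i : Fin 4) :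
    vG f x i = ![if i = 0 then 1 else 0, if i = 1 then 1 else 0, if i = 2 then 1 else 0,
      if i = 3 then 1 else 0, pd f x i 0, pd f x i 1, pd f x i 2, pd f x i 3] := by
  funext k
  fin_cases i <;> fin_cases k <;>
    simp [vG, xi, yi, Fin.sum_univ_four, Pi.single_apply]

theorem gram_eq (f : (Fin 4 → ℝ) → (Fin 4 → ℝ)) (x : Fin 4 → ℝ) : gram8 f x = Gm (pd f x) := by
  ext i j
  simp only [gram8, vG_eq, Matrix.of_apply, Gm, Fin.sum_univ_succ]
  fin_cases i <;> fin_cases j <;> simp <;> ring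

theorem T_eq (f : (Fin 4 → ℝ) → (Fin 4 → ℝ)) (x : Fin 4 → ℝ) (μ : Fin 7) :
    evE (T4 μ) (Dv (fun j => vG f x j)) = Tt (pd f x) μ := by
  fin_cases μ <;>
  · simp [evE, T4, Dv4, det4, vG_eq, Tt, d2, d3]
    try ring

theorem Ph_eq (f : (Fin 4 → ℝ) → (Fin 4 → ℝ)) (x : Fin 4 → ℝ) :
    evE TPhi (Dv (fun j => vG f x j)) = PhE (pd f x) := by
  simp [evE, TPhi, Dv4, det4, vG_eq, PhE, d2, d3, d4]
  ring

theorem evE_hstar (T : List (Finset (Fin 8) × ℤ)) (W : Form ℝ 8) :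
    evE T (hstar W) = evE (T.map fun p => (p.1ᶜ, p.2 * sgZ p.1ᶜ p.1)) W := by
  simp only [evE, List.map_map]
  congr 1
  apply List.map_congr_left
  intro p _
  simp [hstar, signMerge_eq, mul_assoc]

theorem T6_table : ∀ μ : Fin 7, (T2 μ).map (fun p => (p.1ᶜ, p.2 * sgZ p.1ᶜ p.1)) = T6 μ := by
  decide +kernel

theorem evE_sub (T : List (Finset (Fin 8) × ℤ)) (V W : Form ℝ 8) (c : ℝ) :
    evE T (fun s => V s - c * W s) = evE T V - c * evE T W := by
  induction T with
  | nil => simp [evE]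
  | cons p T ih =>
    simp only [evE, List.map_cons, List.sum_cons] at *
    rw [ih]; ring

theorem E2_eq (b : Fin 6 → ℝ) (m : Fin 4 → Fin 4 → ℝ) (ω : Form ℝ 8) (hω : isGrade 2 ω)
    (hv : ∀ i j : Fin 8, i < j → ω {i, j} = Om b m i j) (μ : Fin 7) :
    evE (T2 μ) (fun s => ω s - 6⁻¹ * hstar (wedge ω (wedge ω ω)) s) =
      if μ < 3 then Rr b m μ else - Tt m μ := by
  rw [evE_sub, evE_hstar, T6_table]
  fin_cases μ <;>
  · simp [evE, T2, T6, wedge_cube ω hω, hv, Om, Rr, rho, cd, Tt, Fin.sum_univ_succ, d2, d3]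
    try ring

theorem E4_eq (b : Fin 6 → ℝ) (m : Fin 4 → Fin 4 → ℝ) (ω : Form ℝ 8) (hω : isGrade 2 ω)
    (hv : ∀ i j : Fin 8, i < j → ω {i, j} = Om b m i j) (μ : Fin 7) :
    evE (T4 μ) (wedge ω ω) = if μ < 3 then - 2 * Tt m μ else 2 * Rr b m μ := by
  fin_cases μ <;>
  · simp [evE, T4, wedge_sq ω hω, hv, Om, Rr, rho, cd, Tt, Fin.sum_univ_succ, d2, d3]
    try ring


theorem mat4_eta (G : Matrix (Fin 4) (Fin 4) ℝ) :
    G = !![G 0 0, G 0 1, G 0 2, G 0 3; G 1 0, G 1 1, G 1 2, G 1 3;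
      G 2 0, G 2 1, G 2 2, G 2 3; G 3 0, G 3 1, G 3 2, G 3 3] := by
  ext i j; fin_cases i <;> fin_cases j <;> rfl

def sg6 : Fin 6 → ℝ := ![1,-1,1,1,-1,1]

theorem jacobi_adj (G : Matrix (Fin 4) (Fin 4) ℝ) (s t : Fin 6) :
    mi G.adjugate s t = G.det * (sg6 s * sg6 t * mi G t.rev s.rev) := by
  have hd := congrArg Matrix.det (mat4_eta G)
  rw [det4] at hd
  have ha : ∀ i j, G.adjugate i j = (-1) ^ (j + i : ℕ) * ((G (j.succAbove 0) (i.succAbove 0) *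
      G (j.succAbove 1) (i.succAbove 1) * G (j.succAbove 2) (i.succAbove 2) -
      G (j.succAbove 0) (i.succAbove 0) * G (j.succAbove 1) (i.succAbove 2) * G (j.succAbove 2) (i.succAbove 1) -
      G (j.succAbove 0) (i.succAbove 1) * G (j.succAbove 1) (i.succAbove 0) * G (j.succAbove 2) (i.succAbove 2) +
      G (j.succAbove 0) (i.succAbove 1) * G (j.succAbove 1) (i.succAbove 2) * G (j.succAbove 2) (i.succAbove 0) +
      G (j.succAbove 0) (i.succAbove 2) * G (j.succAbove 1) (i.succAbove 0) * G (j.succAbove 2) (i.succAbove 1) -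
      G (j.succAbove 0) (i.succAbove 2) * G (j.succAbove 1) (i.succAbove 1) * G (j.succAbove 2) (i.succAbove 0))) := by
    intro i j
    rw [Matrix.adjugate_fin_succ_eq_det_submatrix, Matrix.det_fin_three]
    rfl
  rw [hd]
  simp only [mi, ha]
  fin_cases s <;> fin_cases t <;>
  · simp [prA, prB, sg6, Fin.succAbove, Fin.rev]
    ring

theorem jacobi (G : Matrix (Fin 4) (Fin 4) ℝ) (h : G.det ≠ 0) (s t : Fin 6) :
    mi G⁻¹ s t = G.det⁻¹ * (sg6 s * sg6 t * mi G t.rev s.rev) := by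
  have h1 := jacobi_adj G s t
  have : mi G⁻¹ s t = G.det⁻¹ * G.det⁻¹ * mi G.adjugate s t := by
    rw [Matrix.inv_def, Ring.inverse_eq_inv']
    simp only [mi, Matrix.smul_apply, smul_eq_mul]
    ring
  rw [this, h1]
  field_simp

def pr (s : Fin 6) : Finset (Fin 4) := {prA s, prB s}

theorem prAB : ∀ s, prA s < prB s := by decide
theorem pr_compl : ∀ s, (pr s)ᶜ = pr s.rev := by decide +kernel
theorem pr_sg : ∀ s, sgZ (pr s.rev) (pr s) = (![1,-1,1,1,-1,1] : Fin 6 → ℤ) s := by decide +kernel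
theorem pr_list : (Finset.univ : Finset (Finset (Fin 4))).filter (fun s => s.card = 2)
    = Finset.univ.image pr := by decide +kernel
theorem pr_inj : Function.Injective pr := by unfold Function.Injective; decide +kernel

theorem starG_pr (G : Matrix (Fin 4) (Fin 4) ℝ) (h : G.det ≠ 0) (ε : ℝ) (β : Form ℝ 4)
    (s : Fin 6) (hsym : ∀ i j, G i j = G j i) :
    starG G ε β (pr s) = (ε * √G.det) * G.det⁻¹ * ∑ t, cd (fun t => β (pr t)) t * mi G s t := by
  have h1 : innerG2 G⁻¹ (indF (pr s)ᶜ) β = ∑ t, β (pr t) * mi G⁻¹ s.rev t := by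
    unfold innerG2
    rw [Finset.sum_eq_single ((pr s)ᶜ)]
    · simp only [indF, if_true, one_mul]
      have : ∑ t, β t * minor2 G⁻¹ (pr s)ᶜ t = ∑ t ∈ Finset.univ.image pr, β t * minor2 G⁻¹ (pr s)ᶜ t := by
        rw [← pr_list]
        symm
        apply Finset.sum_subset (Finset.subset_univ _)
        intro t _ ht
        have : t.card ≠ 2 := by simpa using ht
        simp [minor2, this]
      rw [this, Finset.sum_image (fun a _ b _ hab => pr_inj hab)]
      apply Finset.sum_congr rfl
      intro t _
      rw [pr_compl, pr, pr, minor2_eq _ _ _ _ _ (prAB _) (prAB _)]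
      rfl
    · intro t _ ht
      simp [indF, ht]
    · simp
  have hs : (signMerge (pr s)ᶜ (pr s) : ℝ) = sg6 s := by
    rw [signMerge_eq, pr_compl, pr_sg]
    fin_cases s <;> simp [sg6]
  have hss : sg6 s * sg6 s.rev = 1 := by fin_cases s <;> simp [sg6, Fin.rev]
  have hmi : ∀ t, mi G t s = mi G s t := by
    intro t
    simp only [mi]
    rw [hsym (prA t), hsym (prB t) (prB s), hsym (prA t) (prB s), hsym (prB t) (prA s)]
    ring
  have hsum : ∑ t, β (pr t) * mi G⁻¹ s.rev t
      = G.det⁻¹ * sg6 s.rev * ∑ t, cd (fun t => β (pr t)) t * mi G s t := by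
    simp only [jacobi G h, Fin.rev_rev, hmi]
    simp [Fin.sum_univ_succ, cd, sg6, Fin.rev]
    ring
  rw [starG, hs, h1, hsum]
  linear_combination (ε * √G.det * G.det⁻¹ * ∑ t, cd (fun t => β (pr t)) t * mi G s t) * hss

theorem starG_card (G : Matrix (Fin 4) (Fin 4) ℝ) (ε : ℝ) (β : Form ℝ 4)
    (t : Finset (Fin 4)) (ht : t.card ≠ 2) : starG G ε β t = 0 := by
  have : (tᶜ).card ≠ 2 := by
    rw [Finset.card_compl]; simp
    have := Finset.card_le_univ t
    simp at this
    omega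
  have h : innerG2 G⁻¹ (indF tᶜ) β = 0 := by
    unfold innerG2
    apply Finset.sum_eq_zero; intro s _
    apply Finset.sum_eq_zero; intro r _
    by_cases hs : s = tᶜ
    · subst hs; simp [minor2, this]
    · simp [indF, hs]
  simp [starG, h]

theorem asd_iff (m : Fin 4 → Fin 4 → ℝ) (β : Form ℝ 4) (hβ : isGrade 2 β) (hT : ∀ μ, Tt m μ = 0) :
    starG (Gm m) (Real.sign (PhE m)) β = -β ↔ ∀ μ, Rr (fun t => β (pr t)) m μ = 0 := by
  have hdet : (Gm m).det = PhE m ^ 2 := by rw [det_Gm]; simp [hT]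
  have hpos : 0 < (Gm m).det := by
    have h1 : (Gm m) = 1 + Matrix.of m * (Matrix.of m).conjTranspose := by
      ext i j
      simp [Gm, Matrix.mul_apply, Fin.sum_univ_four, Matrix.one_apply]
    rw [h1]
    apply Matrix.PosDef.det_pos
    exact Matrix.PosDef.one.add_posSemidef (Matrix.posSemidef_self_mul_conjTranspose _)
  have hne : PhE m ≠ 0 := by
    intro h; rw [hdet, h] at hpos; simp at hpos
  have hsym : ∀ i j, Gm m i j = Gm m j i := by
    intro i j
    simp only [Gm, Matrix.of_apply, eq_comm (a := i)]
    ring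
  have hσ : Real.sign (PhE m) * √(Gm m).det = PhE m := by
    rw [hdet, Real.sqrt_sq_eq_abs]
    rcases lt_or_gt_of_ne hne with h | h
    · rw [Real.sign_of_neg h, abs_of_neg h]; ring
    · rw [Real.sign_of_pos h, abs_of_pos h]; ring
  rw [R_iff]
  have key : ∀ s, starG (Gm m) (Real.sign (PhE m)) β (pr s)
      = (PhE m)⁻¹ * ∑ t, cd (fun t => β (pr t)) t * mi (Gm m) s t := by
    intro s
    rw [starG_pr _ hpos.ne' _ _ _ hsym, hσ, hdet]
    congr 1
    field_simp
  constructor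
  · intro h s
    have h1 := congrFun h (pr s)
    rw [key, Pi.neg_apply, inv_mul_eq_iff_eq_mul₀ hne] at h1
    rw [h1]; ring
  · intro h
    funext t
    by_cases ht : t.card = 2
    · have : t ∈ Finset.univ.image pr := by rw [← pr_list]; simp [ht]
      obtain ⟨s, -, rfl⟩ := Finset.mem_image.1 this
      rw [key, Pi.neg_apply, inv_mul_eq_iff_eq_mul₀ hne]
      linear_combination h s
    · rw [starG_card _ _ _ _ ht, Pi.neg_apply, hβ _ ht, neg_zero]

/-! ### Values of the curvature forms -/

theorem e1_grade (i : Fin n) : isGrade 1 (e1 i : Form ℝ n) := by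
  intro s hs
  have : s ≠ {i} := by rintro rfl; simp at hs
  simp [e1, this]

theorem e1e1_grade (i j : Fin n) : isGrade 2 (wedge (e1 i) (e1 j) : Form ℝ n) :=
  isGrade_wedge _ _ 1 1 (e1_grade i) (e1_grade j)

theorem isGrade_sum2 (c : Fin 4 → Fin 4 → ℝ) (F : Fin 4 → Fin 4 → Form ℝ n)
    (h : ∀ i j, isGrade 2 (F i j)) : isGrade 2 (∑ i, ∑ j, c i j • F i j) := by
  intro s hs
  simp only [Finset.sum_apply, Pi.smul_apply, h _ _ s hs]
  simp

theorem e1e1_apply (i j p q : Fin n) (h : p < q) :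
    (wedge (e1 i) (e1 j) : Form ℝ n) {p, q}
      = (if i = p ∧ j = q then 1 else 0) - (if i = q ∧ j = p then 1 else 0) := by
  have hpq : p ≠ q := h.ne
  rw [wedge_e1]
  by_cases hi : i = p
  · subst hi
    have e : ({i, q} : Finset (Fin n)) \ {i} = {q} := by
      ext x; simp; constructor
      · tauto
      · rintro rfl; exact ⟨Or.inr rfl, hpq.symm⟩
    have z : sgZ ({i} : Finset (Fin n)) {q} = 1 := by
      have : ¬ q < i := h.not_gt
      simp [sgZ, Finset.filter_singleton, this]
    simp [e, z, e1, hpq, eq_comm (a := q)]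
  · by_cases hq : i = q
    · subst hq
      have e : ({p, i} : Finset (Fin n)) \ {i} = {p} := by
        ext x; simp; constructor
        · tauto
        · rintro rfl; exact ⟨Or.inl rfl, hpq⟩
      have z : sgZ ({i} : Finset (Fin n)) {p} = -1 := by
        simp [sgZ, Finset.filter_singleton, h]
      simp [e, z, e1, hi, eq_comm (a := p)]
      split_ifs <;> simp
    · simp [hi, hq]

def bA (A : (Fin 4 → ℝ) → (Fin 4 → ℝ)) (x : Fin 4 → ℝ) (s : Fin 6) : ℝ :=
  pd A x (prA s) (prB s) - pd A x (prB s) (prA s)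

theorem beta4_grade (A : (Fin 4 → ℝ) → (Fin 4 → ℝ)) (x : Fin 4 → ℝ) : isGrade 2 (beta4 A x) :=
  isGrade_sum2 _ _ fun _ _ => e1e1_grade _ _

theorem beta4_pr (A : (Fin 4 → ℝ) → (Fin 4 → ℝ)) (x : Fin 4 → ℝ) :
    (fun s => beta4 A x (pr s)) = bA A x := by
  funext s
  simp only [beta4, pr, Finset.sum_apply, Pi.smul_apply, e1e1_apply _ _ _ _ (prAB s), bA]
  simp only [Fin.sum_univ_four]
  fin_cases s <;> simp [prA, prB] <;> ring

def om8 (f A : (Fin 4 → ℝ) → (Fin 4 → ℝ)) (x : Fin 4 → ℝ) : Form ℝ 8 :=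
  gammaB8 A x + gammaS f x

theorem om8_grade (f A : (Fin 4 → ℝ) → (Fin 4 → ℝ)) (x : Fin 4 → ℝ) : isGrade 2 (om8 f A x) := by
  intro s hs
  rw [om8, Pi.add_apply, gammaB8, gammaS, isGrade_sum2 _ _ (fun _ _ => e1e1_grade _ _) s hs,
    isGrade_sum2 _ _ (fun _ _ => e1e1_grade _ _) s hs, add_zero]

theorem om8_val (f A : (Fin 4 → ℝ) → (Fin 4 → ℝ)) (x : Fin 4 → ℝ) (i j : Fin 8) (h : i < j) :
    om8 f A x {i, j} = Om (bA A x) (pd f x) i j := by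
  simp only [om8, gammaB8, gammaS, Pi.add_apply, Finset.sum_apply, Pi.smul_apply,
    e1e1_apply _ _ _ _ h]
  simp only [Fin.sum_univ_four]
  have hx : xi 0 = 0 ∧ xi 1 = 1 ∧ xi 2 = 2 ∧ xi 3 = 3 := by decide
  have hy : yi 0 = 4 ∧ yi 1 = 5 ∧ yi 2 = 6 ∧ yi 3 = 7 := by decide
  simp only [hx, hy]
  fin_cases i <;> fin_cases j <;> first
    | exact absurd h (by decide)
    | (simp [Om, bA, prA, prB] <;> try ring)

/-! ### Complex forms -/

theorem wedge_cast {n : ℕ} (c d : ℂ) (a b : Form ℝ n) :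
    wedge (fun s => c * (a s : ℂ)) (fun s => d * (b s : ℂ))
      = fun s => (c * d) * ((wedge a b s : ℝ) : ℂ) := by
  funext s
  simp only [wedge, signMerge_eq]
  push_cast
  rw [Finset.mul_sum]
  exact Finset.sum_congr rfl fun _ _ => by ring

theorem hstar_cast {n : ℕ} (c : ℂ) (a : Form ℝ n) :
    hstar (fun s => c * (a s : ℂ)) = fun s => c * ((hstar a s : ℝ) : ℂ) := by
  funext s
  simp only [hstar, signMerge_eq]
  push_cast; ring

theorem evE_cast {n : ℕ} (T : List (Finset (Fin n) × ℤ)) (c : ℂ) (a : Form ℝ n) :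
    evE T (fun s => c * (a s : ℂ)) = c * ((evE T a : ℝ) : ℂ) := by
  induction T with
  | nil => simp [evE]
  | cons p T ih =>
    simp only [evE, List.map_cons, List.sum_cons] at *
    rw [ih]; push_cast; ring

theorem F_eq (f A : (Fin 4 → ℝ) → (Fin 4 → ℝ)) (x : Fin 4 → ℝ) :
    FB8 A x + FS8 f x = fun s => Complex.I * ((om8 f A x s : ℝ) : ℂ) := by
  funext s
  simp only [FB8, FS8, om8, Pi.add_apply]
  push_cast; ring

theorem point (f A : (Fin 4 → ℝ) → (Fin 4 → ℝ)) (x : Fin 4 → ℝ) :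
    (tau4 (fun j => vG f x j) = 0 ∧ starG (gram8 f x) (eps8 f x) (beta4 A x) = - beta4 A x) ↔
      (pi27 ((FB8 A x + FS8 f x) + (6 : ℂ)⁻¹ •
          hstar (wedge (FB8 A x + FS8 f x)
            (wedge (FB8 A x + FS8 f x) (FB8 A x + FS8 f x)))) = 0 ∧
        pi47 (wedge (FB8 A x + FS8 f x) (FB8 A x + FS8 f x)) = 0) := by
  have hg := om8_grade f A x
  have hv := om8_val f A x
  rw [F_eq, wedge_cast, wedge_cast, hstar_cast]
  set ω := om8 f A x with hω
  set m := pd f x with hm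
  set b := bA A x with hb
  have hα : ((fun s => Complex.I * ((ω s : ℝ) : ℂ)) + (6 : ℂ)⁻¹ •
      (fun s => Complex.I * (Complex.I * Complex.I) * ((hstar (wedge ω (wedge ω ω)) s : ℝ) : ℂ)))
      = (fun s => Complex.I * (((ω s - 6⁻¹ * hstar (wedge ω (wedge ω ω)) s : ℝ)) : ℂ) : Form ℂ 8) := by
    funext s
    simp only [Pi.add_apply, Pi.smul_apply, smul_eq_mul, Complex.I_mul_I]
    push_cast; ring
  have hgr : isGrade 2 (fun s => ω s - 6⁻¹ * hstar (wedge ω (wedge ω ω)) s) := by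
    intro s hs
    have h6 := isGrade_hstar _ (isGrade_wedge ω _ 2 4 hg (isGrade_wedge ω ω 2 2 hg hg))
    simp only [hg s hs, h6 s hs]; simp
  have hgrC : isGrade 2 (fun s => Complex.I * (((ω s - 6⁻¹ * hstar (wedge ω (wedge ω ω)) s : ℝ)) : ℂ) : Form ℂ 8) := by
    intro s hs
    have := hgr s hs
    simp only at this
    simp only [this]; simp
  rw [hα, pi27_zero _ hgrC, pi47_zero]
  simp only [evE_cast, E2_eq b m ω hg hv, E4_eq b m ω hg hv]
  have l1 : ∀ r : ℝ, Complex.I * (r : ℂ) = 0 ↔ r = 0 := by intro r; simp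
  have l2 : ∀ r : ℝ, Complex.I * Complex.I * (r : ℂ) = 0 ↔ r = 0 := by intro r; simp
  simp only [l1, l2]
  have hL : tau4 (fun j => vG f x j) = 0 ↔ ∀ μ, Tt m μ = 0 := by
    rw [tau4_zero]; simp only [T_eq, hm]
  have hε : eps8 f x = Real.sign (PhE m) := by rw [eps8, evalPhi, Ph_eq]
  rw [hL, hε, gram_eq]
  constructor
  · rintro ⟨hT, hS⟩
    rw [asd_iff m _ (beta4_grade A x) hT, beta4_pr] at hS
    constructor
    · intro μ; split_ifs
      · exact hS μ
      · rw [hT μ, neg_zero]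
    · intro μ; split_ifs
      · rw [hT μ, mul_zero]
      · rw [hS μ, mul_zero]
  · rintro ⟨h2, h4⟩
    have hT : ∀ μ, Tt m μ = 0 := by
      intro μ
      have a := h2 μ
      have c := h4 μ
      by_cases h : μ < 3
      · rw [if_pos h] at c; linarith
      · rw [if_neg h] at a; linarith
    refine ⟨hT, ?_⟩
    rw [asd_iff m _ (beta4_grade A x) hT, beta4_pr]
    intro μ
    have a := h2 μ
    have c := h4 μ
    by_cases h : μ < 3
    · rw [if_pos h] at a; exact a
    · rw [if_neg h] at c; linarith

/-- Theorem 1.2 / Theorem 5.7.  The following are equivalent: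
(1) the graph `S` is Cayley with an appropriate orientation and `β = -√-1 F_∇^B` is
anti-self-dual with respect to the induced metric and the orientation making `S` Cayley;
(2) `π²₇(F_∇ + (1/6) *₈ F_∇³) = 0` and `π⁴₇(F_∇²) = 0`, where `F_∇ = F_∇^B + F_∇^S`. -/
theorem statement1 (B : Set (Fin 4 → ℝ)) (hB : IsOpen B)
    (f : (Fin 4 → ℝ) → (Fin 4 → ℝ)) (hf : ContDiffOn ℝ (⊤ : ℕ∞) f B)
    (A : (Fin 4 → ℝ) → (Fin 4 → ℝ)) (hA : ContDiffOn ℝ (⊤ : ℕ∞) A B) :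
    ((∀ x ∈ B, tau4 (fun j => vG f x j) = 0) ∧
      (∀ x ∈ B, starG (gram8 f x) (eps8 f x) (beta4 A x) = - beta4 A x)) ↔
      (∀ x ∈ B,
        pi27 ((FB8 A x + FS8 f x) + (6 : ℂ)⁻¹ •
          hstar (wedge (FB8 A x + FS8 f x)
            (wedge (FB8 A x + FS8 f x) (FB8 A x + FS8 f x)))) = 0 ∧
        pi47 (wedge (FB8 A x + FS8 f x) (FB8 A x + FS8 f x)) = 0) := by
  rw [← forall₂_and]
  exact forall₂_congr fun x _ => point f A x

end FMpaper
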